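/- Let n∈ℕ, p ≥ 1 and 0 < s_o ≤ s < 1. Then there exists a constant c = c(n,p,s_o) ≥ 1 such that for every R>0, every x_o∈ℝⁿ and every u∈L^p(B_R(x_o)) one has ⨍_{B_R(x_o)} |u−(u)_{B_R(x_o)}|^p dx ≤ c (1−s) R^{sp} ⨍_{B_R(x_o)} ∫_{B_R(x_o)} |u(x)−u(y)|^p/|x−y|^{n+sp} dx dy, where ⨍_{B_R}∫_{B_R} denotes |B_R|^{−1} times the double integral over B_R×B_R (the inequality being interpreted as trivially true if the right-hand side is infinite). -/

import Mathlib

open MeasureTheory Metric Set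
open scoped ENNReal

noncomputable section

/-- Double Gagliardo integral `∬_{D×D} |u(x)-u(y)|^p / |x-y|^{n+sp} dx dy` in `ℝ≥0∞`. -/
def gagliardoE (n : ℕ) (s p : ℝ) (D : Set (EuclideanSpace ℝ (Fin n)))
    (u : EuclideanSpace ℝ (Fin n) → ℝ) : ℝ≥0∞ :=
  ∫⁻ x in D, ∫⁻ y in D, ENNReal.ofReal (|u x - u y| ^ p / dist x y ^ ((n : ℝ) + s * p))

/-- Nonlocal tail `Tail(u; B_R(x₀))` in `ℝ≥0∞`. -/
def tailE (n : ℕ) (s p : ℝ) (u : EuclideanSpace ℝ (Fin n) → ℝ)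
    (x₀ : EuclideanSpace ℝ (Fin n)) (R : ℝ) : ℝ≥0∞ :=
  (ENNReal.ofReal (R ^ (s * p)) *
      ∫⁻ x in (ball x₀ R)ᶜ,
        ENNReal.ofReal (|u x| ^ (p - 1) / dist x x₀ ^ ((n : ℝ) + s * p))) ^ (1 / (p - 1))

/-- `f ∈ L^q_loc(D)`. -/
def MemLploc (n : ℕ) (q : ℝ) (D : Set (EuclideanSpace ℝ (Fin n)))
    (f : EuclideanSpace ℝ (Fin n) → ℝ) : Prop :=
  Measurable f ∧
    ∀ K : Set (EuclideanSpace ℝ (Fin n)), K ⊆ D → IsCompact K →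
      (∫⁻ x in K, ENNReal.ofReal (|f x| ^ q)) < ⊤

/-- `u` is a local weak solution of `(-Δ_p)^s u = f` in `D`. -/
def IsLocalWeakSolution (n : ℕ) (p s : ℝ) (D : Set (EuclideanSpace ℝ (Fin n)))
    (f u : EuclideanSpace ℝ (Fin n) → ℝ) : Prop :=
  Measurable u ∧
  (∀ K : Set (EuclideanSpace ℝ (Fin n)), K ⊆ D → IsCompact K →
      (∫⁻ x in K, ENNReal.ofReal (|u x| ^ p)) < ⊤ ∧ gagliardoE n s p K u < ⊤) ∧
  (∫⁻ x, ENNReal.ofReal (|u x| ^ (p - 1) / (1 + ‖x‖) ^ ((n : ℝ) + s * p))) < ⊤ ∧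
  ∀ φ : EuclideanSpace ℝ (Fin n) → ℝ, Measurable φ →
    (∃ K : Set (EuclideanSpace ℝ (Fin n)), IsCompact K ∧ K ⊆ D ∧
      ∀ᵐ x, x ∉ K → φ x = 0) →
    (∫⁻ x, ENNReal.ofReal (|φ x| ^ p)) < ⊤ →
    gagliardoE n s p Set.univ φ < ⊤ →
    (∫ x, ∫ y,
        |u x - u y| ^ (p - 2) * (u x - u y) * (φ x - φ y) / dist x y ^ ((n : ℝ) + s * p)) =
      ∫ x in D, f x * φ x

/-- The signed `γ`-power `𝐚^γ = |a|^{γ-1} a`. -/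
def sgnPow (γ a : ℝ) : ℝ := |a| ^ (γ - 1) * a

/-!
Let `A` be the double integral of `|u(x)-u(y)|^p` over `D × D`, where `D` is convex of diameter `d`.
By Jensen's inequality it controls the mean oscillation of `u`. Walk from `x` to `y` in `k` equal
steps. All of them stay in `D`, so the power mean inequality and, for each step, the linear change
of variables `(x, y) ↦ (endpoints of the step)` with Jacobian `k^{-n}` give
`A ≤ k^{p+n} ∬_{|x-y| ≤ d/k} |u(x)-u(y)|^p`.

Multiply by `k^{-q-1}` with `q = p(1-s)` and sum over `k ≥ 1`. On the left `∑ k^{-q-1} ≥ 1/q`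
provides the factor `1-s`. On the right the pair `(x, y)` is counted for `k ≤ d/|x-y|`, and
`∑_{k ≤ t} k^{n+sp-1} ≤ t^{n+sp}` rebuilds the kernel `|x-y|^{-(n+sp)}`.
-/

section PowerSums

lemma inv_ofReal_le_tsum_natCast_add_one_rpow {q : ℝ} (hq : 0 < q) :
    (ENNReal.ofReal q)⁻¹ ≤ ∑' k : ℕ, ((k : ℝ≥0∞) + 1) ^ (-q - 1) := by
  have hanti : AntitoneOn (fun x : ℝ => x ^ (-q - 1)) (Ici ((1 : ℕ) : ℝ)) := fun x hx y _ hxy =>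
    Real.rpow_le_rpow_of_nonpos (by simp only [Nat.cast_one, mem_Ici] at hx; linarith) hxy
      (by linarith)
  have hsum : Summable fun k : ℕ => (k : ℝ) ^ (-q - 1) :=
    Real.summable_nat_rpow.2 (by linarith)
  have hpos : ∀ x ∈ Ioi ((1 : ℕ) : ℝ), (0 : ℝ) ≤ x ^ (-q - 1) := fun x hx =>
    Real.rpow_nonneg (by simp only [Nat.cast_one, mem_Ioi] at hx; linarith) _
  have hintegral : ∫ x in Ioi ((1 : ℕ) : ℝ), x ^ (-q - 1) = q⁻¹ := by
    rw [Nat.cast_one, integral_Ioi_rpow_of_lt (by linarith) one_pos]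
    simp [neg_div_neg_eq]
  calc (ENNReal.ofReal q)⁻¹ = ENNReal.ofReal q⁻¹ := (ENNReal.ofReal_inv_of_pos hq).symm
    _ ≤ ENNReal.ofReal (∑' k : ℕ, ((k + 1 : ℕ) : ℝ) ^ (-q - 1)) :=
      ENNReal.ofReal_le_ofReal (hintegral ▸ hanti.integral_le_tsum_comp_add 1 hsum hpos)
    _ = ∑' k : ℕ, ((k : ℝ≥0∞) + 1) ^ (-q - 1) := by
      rw [ENNReal.ofReal_tsum_of_nonneg (fun _ => by positivity) ((summable_nat_add_iff 1).2 hsum)]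
      refine tsum_congr fun k => ?_
      rw [← ENNReal.ofReal_rpow_of_pos (by positivity), ENNReal.ofReal_natCast, Nat.cast_add_one]

lemma tsum_ite_natCast_add_one_rpow_le {a : ℝ} (ha : 1 ≤ a) (t : ℝ≥0∞) :
    ∑' k : ℕ, (if (k : ℝ≥0∞) + 1 ≤ t then ((k : ℝ≥0∞) + 1) ^ (a - 1) else 0) ≤ t ^ a := by
  induction t with
  | top => simp [ENNReal.top_rpow_of_pos (one_pos.trans_le ha)]
  | coe t =>
    have hzero : ∀ k ∉ Finset.range ⌊t⌋₊,
        (if (k : ℝ≥0∞) + 1 ≤ t then ((k : ℝ≥0∞) + 1) ^ (a - 1) else 0) = 0 := fun k hk =>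
      if_neg fun hkt => hk <| Finset.mem_range.2 <| Nat.le_floor (by exact_mod_cast hkt)
    calc _ = ∑ k ∈ Finset.range ⌊t⌋₊,
          (if (k : ℝ≥0∞) + 1 ≤ t then ((k : ℝ≥0∞) + 1) ^ (a - 1) else 0) := tsum_eq_sum hzero
      _ ≤ ∑ _k ∈ Finset.range ⌊t⌋₊, (t : ℝ≥0∞) ^ (a - 1) := by
        refine Finset.sum_le_sum fun k _ => ?_
        split_ifs with hkt
        · exact ENNReal.rpow_le_rpow hkt (by linarith)
        · exact zero_le
      _ = (⌊t⌋₊ : ℝ≥0∞) * (t : ℝ≥0∞) ^ (a - 1) := by simp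
      _ ≤ t * (t : ℝ≥0∞) ^ (a - 1) := by
        gcongr
        exact_mod_cast Nat.floor_le (zero_le : 0 ≤ t)
      _ = (t : ℝ≥0∞) ^ a := by
        nth_rewrite 1 [← ENNReal.rpow_one (t : ℝ≥0∞)]
        rw [← ENNReal.rpow_add_of_nonneg _ _ zero_le_one (by linarith), add_sub_cancel]

end PowerSums

section MeanOscillation

variable {α F : Type*} [MeasurableSpace α] [NormedAddCommGroup F] [NormedSpace ℝ F] {p : ℝ}

lemma enorm_integral_rpow_le_lintegral (hp : 1 ≤ p) (μ : Measure α) [IsProbabilityMeasure μ]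
    {f : α → F} (hf : AEStronglyMeasurable f μ) :
    ‖∫ x, f x ∂μ‖ₑ ^ p ≤ ∫⁻ x, ‖f x‖ₑ ^ p ∂μ := by
  have hp₀ : 0 < p := one_pos.trans_le hp
  calc ‖∫ x, f x ∂μ‖ₑ ^ p ≤ eLpNorm' f 1 μ ^ p := by
        gcongr
        simpa [eLpNorm'] using enorm_integral_le_lintegral_enorm f
    _ ≤ eLpNorm' f p μ ^ p := by
        gcongr
        exact eLpNorm'_le_eLpNorm'_of_exponent_le one_pos hp μ hf
    _ = ∫⁻ x, ‖f x‖ₑ ^ p ∂μ := by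
        rw [eLpNorm', ← ENNReal.rpow_mul, one_div_mul_cancel hp₀.ne', ENNReal.rpow_one]

variable [CompleteSpace F]

/-- If `f` is not integrable, the integral on the left is a junk value, but then the right-hand
side is infinite. -/
lemma enorm_sub_integral_rpow_le_lintegral (hp : 1 ≤ p) (μ : Measure α) [IsProbabilityMeasure μ]
    {f : α → F} (hf : AEStronglyMeasurable f μ) (c : F) :
    ‖c - ∫ x, f x ∂μ‖ₑ ^ p ≤ ∫⁻ x, ‖c - f x‖ₑ ^ p ∂μ := by
  have hp₀ : 0 < p := one_pos.trans_le hp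
  have hsub : AEStronglyMeasurable (fun x => c - f x) μ := aestronglyMeasurable_const.sub hf
  by_cases htop : ∫⁻ x, ‖c - f x‖ₑ ^ p ∂μ = ⊤
  · exact htop ▸ le_top
  have hmem : MemLp (fun x => c - f x) (ENNReal.ofReal p) μ := by
    refine ⟨hsub, ?_⟩
    rw [eLpNorm_lt_top_iff_lintegral_rpow_enorm_lt_top (by simpa using hp₀) ENNReal.ofReal_ne_top,
      ENNReal.toReal_ofReal hp₀.le]
    exact Ne.lt_top htop
  have hint : Integrable f μ := by
    simpa [Pi.sub_def] using (integrable_const c).sub (hmem.integrable (by simpa using hp))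
  have heq : c - ∫ x, f x ∂μ = ∫ x, (c - f x) ∂μ := by
    rw [integral_sub (integrable_const c) hint]
    simp
  exact heq ▸ enorm_integral_rpow_le_lintegral hp μ hsub

lemma lintegral_enorm_sub_average_rpow_le (hp : 1 ≤ p) (μ : Measure α) [IsFiniteMeasure μ]
    {f : α → F} (hf : AEStronglyMeasurable f μ) :
    ∫⁻ x, ‖f x - ⨍ y, f y ∂μ‖ₑ ^ p ∂μ ≤ (μ univ)⁻¹ * ∫⁻ x, ∫⁻ y, ‖f x - f y‖ₑ ^ p ∂μ ∂μ := by
  rcases eq_zero_or_neZero μ with rfl | _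
  · simp
  rw [← lintegral_const_mul' _ _ (ENNReal.inv_ne_top.2 (NeZero.ne _))]
  refine lintegral_mono fun x => ?_
  simpa only [average_eq', lintegral_smul_measure, smul_eq_mul] using
    enorm_sub_integral_rpow_le_lintegral hp ((μ univ)⁻¹ • μ) (hf.smul_measure _) (f x)

end MeanOscillation

section ChangeOfVariables

open Module (finrank)

variable {E : Type*} [NormedAddCommGroup E] [NormedSpace ℝ E] [FiniteDimensional ℝ E]
  [MeasurableSpace E] [BorelSpace E] (μ : Measure E) [μ.IsAddHaarMeasure]

lemma lintegral_comp_smul (f : E → ℝ≥0∞) {c : ℝ} (hc : c ≠ 0) :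
    ∫⁻ x, f (c • x) ∂μ = ENNReal.ofReal |(c ^ finrank ℝ E)⁻¹| * ∫⁻ x, f x ∂μ := by
  rw [← smul_eq_mul, ← lintegral_smul_measure, ← Measure.map_addHaar_smul μ hc,
    (measurableEmbedding_const_smul₀ hc).lintegral_map]

lemma lintegral_prod_comp_lineMap {f : E × E → ℝ≥0∞} (hf : Measurable f) {a b : ℝ} (hab : a ≠ b) :
    ∫⁻ z, f (AffineMap.lineMap z.1 z.2 a, AffineMap.lineMap z.1 z.2 b) ∂μ.prod μ =
      ENNReal.ofReal |((b - a) ^ finrank ℝ E)⁻¹| * ∫⁻ z, f z ∂μ.prod μ := by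
  simp only [AffineMap.lineMap_apply_module']
  calc ∫⁻ z, f (a • (z.2 - z.1) + z.1, b • (z.2 - z.1) + z.1) ∂μ.prod μ
      = ∫⁻ x, ∫⁻ y, f (a • (y - x) + x, b • (y - x) + x) ∂μ ∂μ :=
        lintegral_prod _ (by fun_prop)
    _ = ∫⁻ x, ∫⁻ h, f (a • h + x, b • h + x) ∂μ ∂μ :=
        lintegral_congr fun x =>
          lintegral_sub_right_eq_self (fun h => f (a • h + x, b • h + x)) x
    _ = ∫⁻ h, ∫⁻ x, f (a • h + x, b • h + x) ∂μ ∂μ :=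
        lintegral_lintegral_swap (by fun_prop)
    _ = ∫⁻ h, ∫⁻ x, f (x, (b - a) • h + x) ∂μ ∂μ := by
        refine lintegral_congr fun h => ?_
        rw [← lintegral_add_left_eq_self (fun x => f (x, (b - a) • h + x)) (a • h)]
        simp only [← add_assoc, ← add_smul, sub_add_cancel]
    _ = ∫⁻ x, ∫⁻ h, f (x, (b - a) • h + x) ∂μ ∂μ :=
        lintegral_lintegral_swap (by fun_prop)
    _ = ∫⁻ x, ENNReal.ofReal |((b - a) ^ finrank ℝ E)⁻¹| * ∫⁻ y, f (x, y) ∂μ ∂μ := by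
        refine lintegral_congr fun x => ?_
        rw [lintegral_comp_smul μ (fun h => f (x, h + x)) (sub_ne_zero.2 hab.symm),
          lintegral_add_right_eq_self (fun y => f (x, y))]
    _ = ENNReal.ofReal |((b - a) ^ finrank ℝ E)⁻¹| * ∫⁻ z, f z ∂μ.prod μ := by
        rw [lintegral_const_mul' _ _ ENNReal.ofReal_ne_top, lintegral_prod _ hf.aemeasurable]

end ChangeOfVariables

section GagliardoEnergy

lemma measurable_edist_comp_rpow {α X : Type*} [MeasurableSpace α] [PseudoEMetricSpace X]
    {u : α → X} (hu : StronglyMeasurable u) (p : ℝ) :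
    Measurable fun z : α × α => edist (u z.1) (u z.2) ^ p :=
  ((hu.comp_measurable measurable_fst).edist
    (hu.comp_measurable measurable_snd)).measurable.pow_const p

variable {E X : Type*} [PseudoEMetricSpace E] [MeasurableSpace E] [PseudoEMetricSpace X]

/-- The Gagliardo energy `∬_{D×D} |u(x)-u(y)|^p / |x-y|^a` of a map between metric spaces. The
exponent `a` of the kernel is free: `a = n + s * p` gives the `p`-th power of the `W^{s,p}` seminorm
on an `n`-dimensional space, and `a = 0` the double integral of `|u(x)-u(y)|^p`. -/
def gagliardoEnergy (μ : Measure E) (D : Set E) (p a : ℝ) (u : E → X) : ℝ≥0∞ :=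
  ∫⁻ x in D, ∫⁻ y in D, edist (u x) (u y) ^ p / edist x y ^ a ∂μ ∂μ

variable {μ : Measure E} {D : Set E} {p a : ℝ} {u v : E → X}

lemma gagliardoEnergy_exponent_zero :
    gagliardoEnergy μ D p 0 u = ∫⁻ x in D, ∫⁻ y in D, edist (u x) (u y) ^ p ∂μ ∂μ := by
  simp [gagliardoEnergy]

lemma gagliardoEnergy_congr_ae (huv : u =ᵐ[μ.restrict D] v) :
    gagliardoEnergy μ D p a u = gagliardoEnergy μ D p a v := by
  refine lintegral_congr_ae ?_
  filter_upwards [huv] with x hx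
  refine lintegral_congr_ae ?_
  filter_upwards [huv] with y hy
  rw [hx, hy]

lemma gagliardoEnergy_eq_lintegral_prod [OpensMeasurableSpace E] [SecondCountableTopology E]
    [SFinite μ] (hu : StronglyMeasurable u) :
    gagliardoEnergy μ D p a u =
      ∫⁻ z in D ×ˢ D, edist (u z.1) (u z.2) ^ p / edist z.1 z.2 ^ a ∂μ.prod μ := by
  rw [← Measure.prod_restrict]
  exact (lintegral_prod _ ((measurable_edist_comp_rpow hu p).div
    (measurable_edist.pow_const a)).aemeasurable).symm

end GagliardoEnergy

section NearDiagonal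

/-- The pairs of points of `D` at distance at most `r`. -/
def nearDiagonal {E : Type*} [PseudoEMetricSpace E] (D : Set E) (r : ℝ≥0∞) : Set (E × E) :=
  D ×ˢ D ∩ {z | edist z.1 z.2 ≤ r}

lemma nearDiagonal_subset_prod {E : Type*} [PseudoEMetricSpace E] (D : Set E) (r : ℝ≥0∞) :
    nearDiagonal D r ⊆ D ×ˢ D :=
  inter_subset_left

lemma measurableSet_nearDiagonal {E : Type*} [PseudoEMetricSpace E] [MeasurableSpace E]
    [OpensMeasurableSpace E] [SecondCountableTopology E] {D : Set E} (hD : MeasurableSet D)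
    (r : ℝ≥0∞) : MeasurableSet (nearDiagonal D r) :=
  (hD.prod hD).inter (measurableSet_le measurable_edist measurable_const)

variable {E : Type*} [MetricSpace E] {D : Set E} {a : ℝ}

lemma tsum_rpow_mul_indicator_nearDiagonal_le (ha : 1 ≤ a) (d : ℝ≥0∞)
    {f : E × E → ℝ≥0∞} (hf : ∀ x, f (x, x) = 0) {z : E × E} (hz : z ∈ D ×ˢ D) :
    ∑' k : ℕ, ((k : ℝ≥0∞) + 1) ^ (a - 1) * (nearDiagonal D (d / (k + 1))).indicator f z ≤
      d ^ a * (f z / edist z.1 z.2 ^ a) := by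
  obtain ⟨x, y⟩ := z
  rcases eq_or_ne x y with rfl | hxy
  · simp [hf]
  have hterm : ∀ k : ℕ,
      ((k : ℝ≥0∞) + 1) ^ (a - 1) * (nearDiagonal D (d / (k + 1))).indicator f (x, y) =
        (if (k : ℝ≥0∞) + 1 ≤ d / edist x y then ((k : ℝ≥0∞) + 1) ^ (a - 1) else 0) * f (x, y) := by
    intro k
    have hiff : (x, y) ∈ nearDiagonal D (d / (k + 1)) ↔ (k : ℝ≥0∞) + 1 ≤ d / edist x y := by
      rw [ENNReal.le_div_iff_mul_le (Or.inl (edist_pos.2 hxy).ne') (Or.inl (edist_ne_top x y)),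
        mul_comm, ← ENNReal.le_div_iff_mul_le (Or.inl (by simp)) (Or.inl (by finiteness))]
      exact and_iff_right hz
    split_ifs with h
    · rw [indicator_of_mem (hiff.2 h)]
    · rw [indicator_of_notMem (mt hiff.1 h), mul_zero, zero_mul]
  calc _ = (∑' k : ℕ, if (k : ℝ≥0∞) + 1 ≤ d / edist x y then ((k : ℝ≥0∞) + 1) ^ (a - 1) else 0) *
        f (x, y) := by rw [tsum_congr hterm, ENNReal.tsum_mul_right]
    _ ≤ (d / edist x y) ^ a * f (x, y) := by
        gcongr
        exact tsum_ite_natCast_add_one_rpow_le ha _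
    _ = d ^ a * (f (x, y) / edist x y ^ a) := by
        rw [ENNReal.div_rpow_of_nonneg _ _ (by linarith), ENNReal.mul_comm_div]

lemma tsum_rpow_mul_setLIntegral_nearDiagonal_le [MeasurableSpace E] [OpensMeasurableSpace E]
    [SecondCountableTopology E] {μ : Measure (E × E)} (hD : MeasurableSet D) (ha : 1 ≤ a)
    (d : ℝ≥0∞) {f : E × E → ℝ≥0∞} (hfm : Measurable f) (hf : ∀ x, f (x, x) = 0) :
    ∑' k : ℕ, ((k : ℝ≥0∞) + 1) ^ (a - 1) * ∫⁻ z in nearDiagonal D (d / (k + 1)), f z ∂μ ≤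
      d ^ a * ∫⁻ z in D ×ˢ D, f z / edist z.1 z.2 ^ a ∂μ := by
  have hmeas : ∀ r, Measurable ((nearDiagonal D r).indicator f) := fun r =>
    hfm.indicator (measurableSet_nearDiagonal hD r)
  calc ∑' k : ℕ, ((k : ℝ≥0∞) + 1) ^ (a - 1) * ∫⁻ z in nearDiagonal D (d / (k + 1)), f z ∂μ
      = ∑' k : ℕ, ∫⁻ z in D ×ˢ D,
          ((k : ℝ≥0∞) + 1) ^ (a - 1) * (nearDiagonal D (d / (k + 1))).indicator f z ∂μ := by
        refine tsum_congr fun k => ?_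
        rw [lintegral_const_mul _ (hmeas _),
          setLIntegral_indicator (measurableSet_nearDiagonal hD _),
          inter_eq_self_of_subset_left (nearDiagonal_subset_prod D _)]
    _ = ∫⁻ z in D ×ˢ D, ∑' k : ℕ,
          ((k : ℝ≥0∞) + 1) ^ (a - 1) * (nearDiagonal D (d / (k + 1))).indicator f z ∂μ :=
        (lintegral_tsum fun k => ((hmeas _).const_mul _).aemeasurable).symm
    _ ≤ ∫⁻ z in D ×ˢ D, d ^ a * (f z / edist z.1 z.2 ^ a) ∂μ :=
        setLIntegral_mono' (hD.prod hD) fun z hz =>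
          tsum_rpow_mul_indicator_nearDiagonal_le ha d hf hz
    _ = d ^ a * ∫⁻ z in D ×ˢ D, f z / edist z.1 z.2 ^ a ∂μ :=
        lintegral_const_mul _ (hfm.div (measurable_edist.pow_const a))

end NearDiagonal

section Chaining

open Module (finrank)

lemma edist_rpow_le_sum_lineMap {E X : Type*} [AddCommGroup E] [Module ℝ E] [PseudoEMetricSpace X]
    {p : ℝ} (hp : 1 ≤ p) {k : ℕ} (hk : k ≠ 0) (u : E → X) (x y : E) :
    edist (u x) (u y) ^ p ≤ (k : ℝ≥0∞) ^ (p - 1) * ∑ i ∈ Finset.range k,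
      edist (u (AffineMap.lineMap x y (i / k : ℝ)))
        (u (AffineMap.lineMap x y ((i + 1) / k : ℝ))) ^ p := by
  have hchain := edist_le_range_sum_edist (fun i : ℕ => u (AffineMap.lineMap x y (i / k : ℝ))) k
  simp only [Nat.cast_zero, zero_div, AffineMap.lineMap_apply_zero, Nat.cast_add_one,
    div_self (Nat.cast_ne_zero.2 hk : (k : ℝ) ≠ 0), AffineMap.lineMap_apply_one] at hchain
  calc edist (u x) (u y) ^ p ≤ (∑ i ∈ Finset.range k, _) ^ p :=
        ENNReal.rpow_le_rpow hchain (by linarith)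
    _ ≤ _ := by simpa using ENNReal.rpow_sum_le_const_mul_sum_rpow (Finset.range k) _ hp

variable {E : Type*} [NormedAddCommGroup E] [NormedSpace ℝ E] {D : Set E}

lemma lineMap_div_mem_nearDiagonal (hD : Convex ℝ D) {x y : E} (hx : x ∈ D) (hy : y ∈ D)
    {i k : ℕ} (hik : i < k) :
    (AffineMap.lineMap x y (i / k : ℝ), AffineMap.lineMap x y ((i + 1) / k : ℝ)) ∈
      nearDiagonal D (ediam D / k) := by
  have hk : (0 : ℝ) < k := by exact_mod_cast i.zero_le.trans_lt hik
  have hik' : (i : ℝ) + 1 ≤ k := by exact_mod_cast hik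
  refine ⟨⟨hD.lineMap_mem hx hy ⟨by positivity, ?_⟩, hD.lineMap_mem hx hy ⟨by positivity, ?_⟩⟩, ?_⟩
  · exact (div_le_one hk).2 (by linarith)
  · exact (div_le_one hk).2 hik'
  have hstep : dist (i / k : ℝ) ((i + 1) / k) = (k : ℝ)⁻¹ := by
    rw [Real.dist_eq, ← sub_div, sub_add_cancel_left, abs_div, abs_neg, abs_one, abs_of_pos hk,
      one_div]
  calc edist (AffineMap.lineMap x y (i / k : ℝ)) (AffineMap.lineMap x y ((i + 1) / k : ℝ))
      = edist x y / k := by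
        rw [edist_dist, dist_lineMap_lineMap, hstep, ENNReal.ofReal_mul (by positivity),
          ENNReal.ofReal_inv_of_pos hk, ENNReal.ofReal_natCast, ← edist_dist, mul_comm,
          div_eq_mul_inv]
    _ ≤ ediam D / k := by
        gcongr
        exact edist_le_ediam_of_mem hx hy

variable [FiniteDimensional ℝ E] [MeasurableSpace E] [BorelSpace E] {μ : Measure E}
  [μ.IsAddHaarMeasure]

lemma setLIntegral_comp_lineMap_div_le (hD : Convex ℝ D) (hDm : MeasurableSet D)
    {f : E × E → ℝ≥0∞} (hf : Measurable f) {i k : ℕ} (hik : i < k) :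
    ∫⁻ z in D ×ˢ D, f (AffineMap.lineMap z.1 z.2 (i / k : ℝ),
        AffineMap.lineMap z.1 z.2 ((i + 1) / k : ℝ)) ∂μ.prod μ ≤
      (k : ℝ≥0∞) ^ finrank ℝ E * ∫⁻ z in nearDiagonal D (ediam D / k), f z ∂μ.prod μ := by
  have hk : (0 : ℝ) < k := by exact_mod_cast i.zero_le.trans_lt hik
  have hN := measurableSet_nearDiagonal hDm (ediam D / k)
  have hne : (i / k : ℝ) ≠ (i + 1) / k := by
    rw [Ne, div_left_inj' hk.ne']
    linarith
  have hjac : ENNReal.ofReal |(((i + 1) / k - i / k : ℝ) ^ finrank ℝ E)⁻¹| =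
      (k : ℝ≥0∞) ^ finrank ℝ E := by
    rw [← sub_div, add_sub_cancel_left, one_div, inv_pow, inv_inv, abs_of_pos (by positivity),
      ENNReal.ofReal_pow hk.le, ENNReal.ofReal_natCast]
  rw [← hjac, ← lintegral_indicator hN, ← lintegral_prod_comp_lineMap μ (hf.indicator hN) hne]
  refine (setLIntegral_mono' (hDm.prod hDm) fun z hz => ?_).trans (setLIntegral_le_lintegral _ _)
  rw [indicator_of_mem (lineMap_div_mem_nearDiagonal hD hz.1 hz.2 hik)]

variable {X : Type*} [PseudoEMetricSpace X] {p : ℝ} {u : E → X}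

lemma setLIntegral_edist_rpow_le_nearDiagonal (hp : 1 ≤ p) (hD : Convex ℝ D)
    (hDm : MeasurableSet D) (hu : StronglyMeasurable u) {k : ℕ} (hk : k ≠ 0) :
    ∫⁻ z in D ×ˢ D, edist (u z.1) (u z.2) ^ p ∂μ.prod μ ≤ (k : ℝ≥0∞) ^ (p + finrank ℝ E) *
      ∫⁻ z in nearDiagonal D (ediam D / k), edist (u z.1) (u z.2) ^ p ∂μ.prod μ := by
  set f : E × E → ℝ≥0∞ := fun z => edist (u z.1) (u z.2) ^ p
  have hf : Measurable f := measurable_edist_comp_rpow hu p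
  have hk₀ : (k : ℝ≥0∞) ≠ 0 := Nat.cast_ne_zero.2 hk
  have hmeas : ∀ i : ℕ, Measurable fun z : E × E => f (AffineMap.lineMap z.1 z.2 (i / k : ℝ),
      AffineMap.lineMap z.1 z.2 ((i + 1) / k : ℝ)) := by
    simp only [AffineMap.lineMap_apply_module']
    fun_prop
  calc ∫⁻ z in D ×ˢ D, f z ∂μ.prod μ
      ≤ ∫⁻ z in D ×ˢ D, (k : ℝ≥0∞) ^ (p - 1) * ∑ i ∈ Finset.range k,
          f (AffineMap.lineMap z.1 z.2 (i / k : ℝ),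
            AffineMap.lineMap z.1 z.2 ((i + 1) / k : ℝ)) ∂μ.prod μ :=
        lintegral_mono fun z => edist_rpow_le_sum_lineMap hp hk u z.1 z.2
    _ = (k : ℝ≥0∞) ^ (p - 1) * ∑ i ∈ Finset.range k, ∫⁻ z in D ×ˢ D,
          f (AffineMap.lineMap z.1 z.2 (i / k : ℝ),
            AffineMap.lineMap z.1 z.2 ((i + 1) / k : ℝ)) ∂μ.prod μ := by
        rw [lintegral_const_mul _ (Finset.measurable_sum _ fun i _ => hmeas i),
          lintegral_finsetSum _ fun i _ => hmeas i]
    _ ≤ (k : ℝ≥0∞) ^ (p - 1) * ∑ _i ∈ Finset.range k,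
          (k : ℝ≥0∞) ^ finrank ℝ E * ∫⁻ z in nearDiagonal D (ediam D / k), f z ∂μ.prod μ := by
        gcongr with i hi
        exact setLIntegral_comp_lineMap_div_le hD hDm hf (Finset.mem_range.1 hi)
    _ = (k : ℝ≥0∞) ^ (p + finrank ℝ E) *
          ∫⁻ z in nearDiagonal D (ediam D / k), f z ∂μ.prod μ := by
        have hexp : p + finrank ℝ E = (p - 1) + 1 + finrank ℝ E := by ring
        rw [Finset.sum_const, Finset.card_range, nsmul_eq_mul, hexp,
          ENNReal.rpow_add _ _ hk₀ (ENNReal.natCast_ne_top k),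
          ENNReal.rpow_add _ _ hk₀ (ENNReal.natCast_ne_top k), ENNReal.rpow_one,
          ENNReal.rpow_natCast]
        ring

end Chaining

section Poincare

open Module (finrank)

variable {E : Type*} [NormedAddCommGroup E] [NormedSpace ℝ E] [FiniteDimensional ℝ E]
  [MeasurableSpace E] [BorelSpace E] {μ : Measure E} [μ.IsAddHaarMeasure] {D : Set E} {p s : ℝ}

variable {X : Type*} [PseudoEMetricSpace X]

lemma gagliardoEnergy_exponent_zero_le_of_stronglyMeasurable [Nontrivial E] (hp : 1 ≤ p)
    (hs₀ : 0 ≤ s) (hs₁ : s < 1) (hD : Convex ℝ D) (hDm : MeasurableSet D) {u : E → X}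
    (hu : StronglyMeasurable u) :
    gagliardoEnergy μ D p 0 u ≤ ENNReal.ofReal (p * (1 - s)) *
      (ediam D ^ (finrank ℝ E + s * p) * gagliardoEnergy μ D p (finrank ℝ E + s * p) u) := by
  have hp₀ : 0 < p := one_pos.trans_le hp
  have hq : 0 < p * (1 - s) := mul_pos hp₀ (sub_pos.2 hs₁)
  set q := p * (1 - s) with hq_def
  set a : ℝ := finrank ℝ E + s * p with ha_def
  have ha : 1 ≤ a := le_add_of_le_of_nonneg (by exact_mod_cast Module.finrank_pos) (by positivity)
  set f : E × E → ℝ≥0∞ := fun z => edist (u z.1) (u z.2) ^ p with hf_def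
  have hfm : Measurable f := measurable_edist_comp_rpow hu p
  have hchain : ∀ k : ℕ, ((k : ℝ≥0∞) + 1) ^ (-q - 1) * gagliardoEnergy μ D p 0 u ≤
      ((k : ℝ≥0∞) + 1) ^ (a - 1) *
        ∫⁻ z in nearDiagonal D (ediam D / (k + 1)), f z ∂μ.prod μ := fun k => by
    have hk := setLIntegral_edist_rpow_le_nearDiagonal (μ := μ) hp hD hDm hu k.succ_ne_zero
    have hexp : a - 1 = (-q - 1) + (p + finrank ℝ E) := by rw [ha_def, hq_def]; ring
    rw [hexp, ENNReal.rpow_add _ _ (by simp) (by finiteness), mul_assoc,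
      gagliardoEnergy_eq_lintegral_prod hu]
    gcongr
    simpa using hk
  have hsum : (ENNReal.ofReal q)⁻¹ * gagliardoEnergy μ D p 0 u ≤
      ediam D ^ a * gagliardoEnergy μ D p a u := calc
    _ ≤ ∑' k : ℕ, ((k : ℝ≥0∞) + 1) ^ (-q - 1) * gagliardoEnergy μ D p 0 u := by
        rw [ENNReal.tsum_mul_right]
        gcongr
        exact inv_ofReal_le_tsum_natCast_add_one_rpow hq
    _ ≤ ∑' k : ℕ, ((k : ℝ≥0∞) + 1) ^ (a - 1) *
          ∫⁻ z in nearDiagonal D (ediam D / (k + 1)), f z ∂μ.prod μ := ENNReal.tsum_le_tsum hchain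
    _ ≤ ediam D ^ a * gagliardoEnergy μ D p a u := by
        rw [gagliardoEnergy_eq_lintegral_prod hu]
        exact tsum_rpow_mul_setLIntegral_nearDiagonal_le hDm ha _ hfm (by simp [hf_def, hp₀])
  rwa [← ENNReal.inv_mul_le_iff (by simpa using hq) ENNReal.ofReal_ne_top]

lemma gagliardoEnergy_exponent_zero_le (hp : 1 ≤ p) (hs₀ : 0 ≤ s) (hs₁ : s < 1)
    (hD : Convex ℝ D) (hDm : MeasurableSet D) {u : E → X}
    (hu : AEStronglyMeasurable u (μ.restrict D)) :
    gagliardoEnergy μ D p 0 u ≤ ENNReal.ofReal (p * (1 - s)) *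
      (ediam D ^ (finrank ℝ E + s * p) * gagliardoEnergy μ D p (finrank ℝ E + s * p) u) := by
  rcases subsingleton_or_nontrivial E with _ | _
  · have hzero : gagliardoEnergy μ D p 0 u = 0 := by
      have hedist : ∀ x y, edist (u x) (u y) = 0 := fun x y => by
        rw [Subsingleton.elim x y, edist_self]
      simp [gagliardoEnergy_exponent_zero, hedist, one_pos.trans_le hp]
    exact hzero ▸ zero_le
  · simp only [gagliardoEnergy_congr_ae hu.ae_eq_mk]
    exact gagliardoEnergy_exponent_zero_le_of_stronglyMeasurable hp hs₀ hs₁ hD hDm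
      hu.stronglyMeasurable_mk

variable {F : Type*} [NormedAddCommGroup F] [NormedSpace ℝ F] [CompleteSpace F]

theorem lintegral_enorm_sub_setAverage_rpow_le_of_convex (hp : 1 ≤ p) (hs₀ : 0 ≤ s)
    (hs₁ : s < 1) (hD : Convex ℝ D) (hDm : MeasurableSet D) (hDμ : μ D ≠ ⊤) {u : E → F}
    (hu : AEStronglyMeasurable u (μ.restrict D)) :
    ∫⁻ x in D, ‖u x - ⨍ y in D, u y ∂μ‖ₑ ^ p ∂μ ≤ (μ D)⁻¹ * (ENNReal.ofReal (p * (1 - s)) *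
      (ediam D ^ (finrank ℝ E + s * p) * gagliardoEnergy μ D p (finrank ℝ E + s * p) u)) := by
  have : IsFiniteMeasure (μ.restrict D) := isFiniteMeasure_restrict.2 hDμ
  calc ∫⁻ x in D, ‖u x - ⨍ y in D, u y ∂μ‖ₑ ^ p ∂μ
      ≤ (μ D)⁻¹ * gagliardoEnergy μ D p 0 u := by
        simpa only [Measure.restrict_apply_univ, gagliardoEnergy_exponent_zero, edist_eq_enorm_sub]
          using lintegral_enorm_sub_average_rpow_le hp (μ.restrict D) hu
    _ ≤ _ := by
        gcongr
        exact gagliardoEnergy_exponent_zero_le hp hs₀ hs₁ hD hDm hu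

lemma inv_addHaar_ball_mul_ediam_rpow_le (μ : Measure E) [μ.IsAddHaarMeasure] (x₀ : E) {R t : ℝ}
    (hR : 0 < R) (ht : 0 ≤ t) :
    (μ (ball x₀ R))⁻¹ * ediam (ball x₀ R) ^ (finrank ℝ E + t) ≤
      2 ^ (finrank ℝ E + t) * (μ (ball 0 1))⁻¹ * ENNReal.ofReal R ^ t := by
  have hR₀ : ENNReal.ofReal R ≠ 0 := by simpa using hR
  have hdiam : ediam (ball x₀ R) ≤ 2 * ENNReal.ofReal R := by
    simpa only [eball_ofReal] using ediam_eball_le (x := x₀) (r := ENNReal.ofReal R)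
  calc (μ (ball x₀ R))⁻¹ * ediam (ball x₀ R) ^ (finrank ℝ E + t)
      ≤ (ENNReal.ofReal R ^ finrank ℝ E * μ (ball 0 1))⁻¹ *
          (2 * ENNReal.ofReal R) ^ (finrank ℝ E + t) := by
        rw [Measure.addHaar_ball_of_pos μ x₀ hR, ENNReal.ofReal_pow hR.le]
        gcongr
    _ = (ENNReal.ofReal R ^ finrank ℝ E)⁻¹ * ENNReal.ofReal R ^ finrank ℝ E *
          (2 ^ (finrank ℝ E + t) * (μ (ball 0 1))⁻¹ * ENNReal.ofReal R ^ t) := by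
        rw [ENNReal.mul_inv (Or.inr measure_ball_lt_top.ne)
            (Or.inr (measure_ball_pos μ 0 one_pos).ne'),
          ENNReal.mul_rpow_of_nonneg _ _ (by positivity),
          ENNReal.rpow_add (x := ENNReal.ofReal R) _ _ hR₀ ENNReal.ofReal_ne_top,
          ENNReal.rpow_natCast]
        ring
    _ = 2 ^ (finrank ℝ E + t) * (μ (ball 0 1))⁻¹ * ENNReal.ofReal R ^ t := by
        rw [ENNReal.inv_mul_cancel (pow_ne_zero _ hR₀) (by finiteness), one_mul]

theorem fractional_poincare_general (μ : Measure E) [μ.IsAddHaarMeasure] (hp : 1 ≤ p) :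
    ∃ c : ℝ, 1 ≤ c ∧ ∀ s : ℝ, 0 ≤ s → s < 1 → ∀ (R : ℝ) (x₀ : E) (u : E → F), 0 < R →
      AEStronglyMeasurable u (μ.restrict (ball x₀ R)) →
        (μ (ball x₀ R))⁻¹ * ∫⁻ x in ball x₀ R, ‖u x - ⨍ y in ball x₀ R, u y ∂μ‖ₑ ^ p ∂μ ≤
          ENNReal.ofReal (c * (1 - s) * R ^ (s * p)) *
            ((μ (ball x₀ R))⁻¹ * gagliardoEnergy μ (ball x₀ R) p (finrank ℝ E + s * p) u) := by
  set C : ℝ≥0∞ := ENNReal.ofReal p * (2 ^ (finrank ℝ E + p) * (μ (ball 0 1))⁻¹) with hC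
  have hCtop : C ≠ ⊤ := ENNReal.mul_ne_top ENNReal.ofReal_ne_top <| ENNReal.mul_ne_top
    (by finiteness) (ENNReal.inv_ne_top.2 (measure_ball_pos μ 0 one_pos).ne')
  refine ⟨max 1 C.toReal, le_max_left _ _, fun s hs₀ hs₁ R x₀ u hR hu => ?_⟩
  have hp₀ : 0 < p := one_pos.trans_le hp
  have hsp : s * p ≤ p := mul_le_of_le_one_left hp₀.le hs₁.le
  set B := ball x₀ R
  set a : ℝ := finrank ℝ E + s * p
  set G := gagliardoEnergy μ B p a u
  have hpoincare := lintegral_enorm_sub_setAverage_rpow_le_of_convex hp hs₀ hs₁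
    (convex_ball x₀ R) measurableSet_ball measure_ball_lt_top.ne hu
  have hscale : (μ B)⁻¹ * ediam B ^ a ≤
      2 ^ (finrank ℝ E + p) * (μ (ball 0 1))⁻¹ * ENNReal.ofReal R ^ (s * p) :=
    (inv_addHaar_ball_mul_ediam_rpow_le μ x₀ hR (by positivity)).trans <| by
      gcongr
      exact one_le_two
  calc (μ B)⁻¹ * ∫⁻ x in B, ‖u x - ⨍ y in B, u y ∂μ‖ₑ ^ p ∂μ
      ≤ (μ B)⁻¹ * ((μ B)⁻¹ * (ENNReal.ofReal (p * (1 - s)) * (ediam B ^ a * G))) := by gcongr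
    _ = ENNReal.ofReal (p * (1 - s)) * ((μ B)⁻¹ * ediam B ^ a) * ((μ B)⁻¹ * G) := by ring
    _ ≤ ENNReal.ofReal (p * (1 - s)) * (2 ^ (finrank ℝ E + p) * (μ (ball 0 1))⁻¹ *
          ENNReal.ofReal R ^ (s * p)) * ((μ B)⁻¹ * G) := by gcongr
    _ = ENNReal.ofReal (C.toReal * (1 - s) * R ^ (s * p)) * ((μ B)⁻¹ * G) := by
        rw [ENNReal.ofReal_mul hp₀.le, ENNReal.ofReal_mul (by nlinarith [C.toReal_nonneg]),
          ENNReal.ofReal_mul ENNReal.toReal_nonneg, ENNReal.ofReal_toReal hCtop,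
          ENNReal.ofReal_rpow_of_pos hR, hC]
        ring
    _ ≤ ENNReal.ofReal (max 1 C.toReal * (1 - s) * R ^ (s * p)) * ((μ B)⁻¹ * G) := by
        gcongr
        exact le_max_right _ _

end Poincare

section RealValued

lemma ofReal_abs_rpow_eq_enorm_rpow {p : ℝ} (hp : 0 ≤ p) (t : ℝ) :
    ENNReal.ofReal (|t| ^ p) = ‖t‖ₑ ^ p := by
  rw [← ENNReal.ofReal_rpow_of_nonneg (abs_nonneg t) hp, ← Real.norm_eq_abs, ofReal_norm]

lemma gagliardoE_eq_gagliardoEnergy {n : ℕ} {s p : ℝ} (hp : 0 < p)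
    (D : Set (EuclideanSpace ℝ (Fin n))) (u : EuclideanSpace ℝ (Fin n) → ℝ) :
    gagliardoE n s p D u = gagliardoEnergy volume D p (n + s * p) u := by
  refine lintegral_congr fun x => lintegral_congr fun y => ?_
  rcases eq_or_ne x y with rfl | hxy
  · simp [hp, hp.ne']
  · have hdist : 0 < dist x y := dist_pos.2 hxy
    rw [ENNReal.ofReal_div_of_pos (by positivity), ofReal_abs_rpow_eq_enorm_rpow hp.le,
      ← edist_eq_enorm_sub, ← ENNReal.ofReal_rpow_of_pos hdist, ← edist_dist]

end RealValued

theorem fractional_poincare (n : ℕ) (p s₀ : ℝ) (hp : 1 ≤ p) (hs₀ : 0 < s₀) :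
    ∃ c : ℝ, 1 ≤ c ∧
      ∀ s : ℝ, s₀ ≤ s → s < 1 →
        ∀ (R : ℝ) (x₀ : EuclideanSpace ℝ (Fin n)) (u : EuclideanSpace ℝ (Fin n) → ℝ),
          0 < R → Measurable u →
          (∫⁻ x in ball x₀ R, ENNReal.ofReal (|u x| ^ p)) < ⊤ →
          (volume (ball x₀ R))⁻¹ *
              ∫⁻ x in ball x₀ R,
                ENNReal.ofReal (|u x - ⨍ y in ball x₀ R, u y| ^ p) ≤
            ENNReal.ofReal (c * (1 - s) * R ^ (s * p)) *
              ((volume (ball x₀ R))⁻¹ * gagliardoE n s p (ball x₀ R) u) := by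
  have hp₀ : 0 < p := one_pos.trans_le hp
  obtain ⟨c, hc, hpoincare⟩ :=
    fractional_poincare_general (F := ℝ) (volume : Measure (EuclideanSpace ℝ (Fin n))) hp
  refine ⟨c, hc, fun s hs hs₁ R x₀ u hR hu _ => ?_⟩
  simpa only [ofReal_abs_rpow_eq_enorm_rpow hp₀.le, gagliardoE_eq_gagliardoEnergy hp₀,
    finrank_euclideanSpace_fin] using
    hpoincare s (hs₀.le.trans hs) hs₁ R x₀ u hR hu.aestronglyMeasurable
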